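/- Let f : ℝⁿ → ℝ be continuously differentiable, let x, d ∈ ℝⁿ with d ≠ 0 and ∇f(x)ᵀd < 0, let B be a symmetric real n×n matrix with dᵀB d ≤ 0, and let σ ∈ (0,1). Then there exists λ̄ > 0 such that f(x + λ d) − f(x) ≤ σ λ ∇f(x)ᵀd + (σ/2) λ² dᵀ B d for all λ ∈ [0, λ̄]. -/

import Mathlib

open Matrix

/-!
Both sides of the modified Armijo inequality vanish at `μ = 0`, where the left side has derivative
`∇f(x)ᵀd` and the right side, whose quadratic term contributes only at second order, has derivative
`σ ∇f(x)ᵀd`. Since `∇f(x)ᵀd < 0` and `σ < 1`, the left side has the strictly smaller derivative, so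
it stays below the right side on a right neighbourhood of `0`.
-/

open Set Topology

theorem eventually_nhdsGT_lt_of_hasDerivWithinAt_neg {φ : ℝ → ℝ} {φ' a : ℝ}
    (hφ : HasDerivWithinAt φ φ' (Ioi a) a) (hφ' : φ' < 0) : ∀ᶠ t in 𝓝[>] a, φ t < φ a := by
  filter_upwards [hφ.limsup_slope_le' self_notMem_Ioi hφ', self_mem_nhdsWithin]
    with t hslope hat
  rwa [slope_def_field, div_lt_iff₀ (sub_pos.2 hat), zero_mul, sub_neg] at hslope

theorem eventually_nhdsGT_lt_of_hasDerivWithinAt_lt {φ ψ : ℝ → ℝ} {φ' ψ' a : ℝ}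
    (hφ : HasDerivWithinAt φ φ' (Ioi a) a) (hψ : HasDerivWithinAt ψ ψ' (Ioi a) a)
    (ha : φ a ≤ ψ a) (hlt : φ' < ψ') : ∀ᶠ t in 𝓝[>] a, φ t < ψ t := by
  filter_upwards [eventually_nhdsGT_lt_of_hasDerivWithinAt_neg (hφ.sub hψ) (sub_neg.2 hlt)]
    with t ht
  exact sub_neg.1 (ht.trans_le (sub_nonpos.2 ha))

theorem exists_forall_mem_Icc_le_of_hasDerivWithinAt_lt {φ ψ : ℝ → ℝ} {φ' ψ' a : ℝ}
    (hφ : HasDerivWithinAt φ φ' (Ioi a) a) (hψ : HasDerivWithinAt ψ ψ' (Ioi a) a)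
    (ha : φ a ≤ ψ a) (hlt : φ' < ψ') : ∃ b, a < b ∧ ∀ t ∈ Icc a b, φ t ≤ ψ t := by
  obtain ⟨b, hab, hb⟩ := mem_nhdsGT_iff_exists_Ioc_subset.1
    (eventually_nhdsGT_lt_of_hasDerivWithinAt_lt hφ hψ ha hlt)
  refine ⟨b, hab, fun t ht => ?_⟩
  rcases ht.1.eq_or_lt with rfl | hat
  · exact ha
  · exact (hb ⟨hat, ht.2⟩).le

theorem hasDerivAt_mul_add_mul_sq_zero (a b : ℝ) :
    HasDerivAt (fun t : ℝ => a * t + b * t ^ 2) a 0 := by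
  simpa using ((hasDerivAt_id (0 : ℝ)).const_mul a).fun_add
    ((hasDerivAt_pow 2 (0 : ℝ)).const_mul b)

theorem modified_armijo_exists_general {E : Type*} [AddCommGroup E] [Module ℝ E] {f : E → ℝ}
    {x d : E} {g σ : ℝ} (hf : HasLineDerivAt ℝ f g x d) (hg : g < 0) (hσ : σ < 1) (q : ℝ) :
    ∃ lam : ℝ, 0 < lam ∧ ∀ μ ∈ Icc (0 : ℝ) lam,
      f (x + μ • d) - f x ≤ σ * μ * g + σ / 2 * μ ^ 2 * q := by
  have hleft : HasDerivAt (fun μ : ℝ => f (x + μ • d) - f x) g 0 := HasDerivAt.sub_const (f x) hf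
  have hright : HasDerivAt (fun μ : ℝ => σ * μ * g + σ / 2 * μ ^ 2 * q) (σ * g) 0 := by
    simpa only [mul_right_comm] using hasDerivAt_mul_add_mul_sq_zero (σ * g) (σ / 2 * q)
  have hslope : g < σ * g := lt_mul_of_lt_one_left hg hσ
  exact exists_forall_mem_Icc_le_of_hasDerivWithinAt_lt hleft.hasDerivWithinAt
    hright.hasDerivWithinAt (by simp) hslope

/-- Let `f : ℝⁿ → ℝ` be continuously differentiable, `d ≠ 0` a descent
direction (`∇f(x)ᵀd < 0`), `B` symmetric with `dᵀBd ≤ 0`, and `σ ∈ (0,1)`. Then there is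
`λ̄ > 0` such that the modified Armijo condition
`f(x + λd) − f(x) ≤ σλ ∇f(x)ᵀd + (σ/2) λ² dᵀBd` holds for all `λ ∈ [0, λ̄]`.
(Here `∇f(x)ᵀd` is the directional derivative `fderiv ℝ f x d`.) -/
theorem modified_armijo_exists {n : ℕ} (f : (Fin n → ℝ) → ℝ) (hf : ContDiff ℝ 1 f)
    (x d : Fin n → ℝ) (hd : d ≠ 0)
    (B : Matrix (Fin n) (Fin n) ℝ) (hB : B.IsSymm)
    (hgd : fderiv ℝ f x d < 0) (hBd : d ⬝ᵥ B.mulVec d ≤ 0)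
    (σ : ℝ) (hσ : σ ∈ Set.Ioo (0 : ℝ) 1) :
    ∃ lam : ℝ, 0 < lam ∧ ∀ μ ∈ Set.Icc (0 : ℝ) lam,
      f (x + μ • d) - f x ≤ σ * μ * fderiv ℝ f x d + σ / 2 * μ ^ 2 * (d ⬝ᵥ B.mulVec d) := by
  have hline : HasLineDerivAt ℝ f (fderiv ℝ f x d) x d :=
    (hf.differentiable one_ne_zero x).hasFDerivAt.hasLineDerivAt d
  exact modified_armijo_exists_general hline hgd hσ.2 _
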